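/- Let p, ν ∈ ℕ with 0 ≤ p ≤ ν. Define A(τ) := (1−τ²)^{p}·P_ν^{(p)}(τ) and B(τ) := (1−τ²)^{p}·q_ν^{(p)}(τ) on (−1,1). Then A and B both satisfy the master ODE (1−τ²)·a″(τ) + 2(p−1)·τ·a′(τ) + (ν(ν+1) − p(p−1))·a(τ) = 0 on (−1,1), they are linearly independent, and every twice-differentiable solution of this ODE on (−1,1) can be written as C·A + D·B for unique constants C, D ∈ ℝ. -/

import Mathlib

/-- The Legendre polynomial `P_ν` via the Rodrigues formula. -/
noncomputable def legendreP (ν : ℕ) (τ : ℝ) : ℝ :=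
  ((-1 : ℝ) ^ ν / (2 ^ ν * Nat.factorial ν)) *
    iteratedDeriv ν (fun t : ℝ => (1 - t ^ 2) ^ ν) τ

/-- The polynomial `W_{ν-1}` (with `W_{-1} = 0`): `legendreW ν` denotes `W_{ν-1}`. -/
noncomputable def legendreW (ν : ℕ) (τ : ℝ) : ℝ :=
  if ν = 0 then 0 else
    ∑ i ∈ Finset.range ((ν - 1) / 2 + 1),
      ((2 * (ν : ℝ) - 4 * (i : ℝ) - 1) / (((ν : ℝ) - (i : ℝ)) * (2 * (i : ℝ) + 1))) *
        legendreP (ν - 2 * i - 1) τ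

/-- The Legendre function of the second kind `q_ν` on `(-1,1)`. -/
noncomputable def legendreQ (ν : ℕ) (τ : ℝ) : ℝ :=
  (1 / 2) * legendreP ν τ * Real.log ((1 + τ) / (1 - τ)) - legendreW ν τ


open Polynomial in
noncomputable def lpoly (n : ℕ) : ℝ[X] :=
  C ((-1 : ℝ) ^ n / (2 ^ n * Nat.factorial n)) * derivative^[n] ((1 - X ^ 2) ^ n)

open Polynomial in
theorem iteratedDeriv_poly (p : ℝ[X]) (k : ℕ) :
    iteratedDeriv k (fun t => p.eval t) = fun t => (derivative^[k] p).eval t := by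
  induction k with
  | zero => simp
  | succ k ih =>
    rw [iteratedDeriv_succ, ih, Function.iterate_succ_apply']
    funext t
    simp

open Polynomial in
theorem legendreP_eq (n : ℕ) : legendreP n = fun t => (lpoly n).eval t := by
  funext t
  have h := congrFun (iteratedDeriv_poly ((1 - X ^ 2) ^ n) n) t
  simp only [eval_pow, eval_sub, eval_one, eval_X] at h
  simp [legendreP, lpoly, h]

/-- Repeated differentiation of a second order ODE (polynomial version). -/
theorem poly_ode_iter (f : Polynomial ℝ) (α β : ℝ)
    (h : (1 - Polynomial.X ^ 2) * Polynomial.derivative (Polynomial.derivative f)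
      + Polynomial.C α * Polynomial.X * Polynomial.derivative f + Polynomial.C β * f = 0)
    (k : ℕ) :
    (1 - Polynomial.X ^ 2) * Polynomial.derivative^[k+2] f
      + Polynomial.C (α - 2 * k) * Polynomial.X * Polynomial.derivative^[k+1] f
      + Polynomial.C (β + α * k - k * (k - 1)) * Polynomial.derivative^[k] f = 0 := by
  induction k with
  | zero => simpa using h
  | succ k ih =>
    have h2 := congrArg Polynomial.derivative ih
    simp only [Function.iterate_succ_apply', Polynomial.derivative_add, Polynomial.derivative_mul,
      Polynomial.derivative_sub, Polynomial.derivative_one, Polynomial.derivative_X_pow,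
      Polynomial.derivative_C, Polynomial.derivative_X, Polynomial.derivative_zero] at h2 ⊢
    rw [← h2]
    simp only [map_add, map_sub, map_mul, Nat.cast_add, Nat.cast_one, Polynomial.C_1, 
      map_natCast, Nat.cast_ofNat, map_ofNat]
    ring

open Polynomial in
theorem lpoly_ode (n : ℕ) :
    (1 - X ^ 2) * derivative (derivative (lpoly n)) - 2 * X * derivative (lpoly n)
      + C ((n : ℝ) * (n + 1)) * lpoly n = 0 := by
  have h1 : (1 - X ^ 2 : ℝ[X]) * derivative ((1 - X ^ 2) ^ n)
      = - 2 * C (n : ℝ) * X * (1 - X ^ 2) ^ n := by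
    cases n with
    | zero => simp
    | succ n =>
      simp only [derivative_pow_succ, derivative_sub, derivative_one, derivative_X_pow]
      simp
      ring
  have h2 := congrArg derivative h1
  have h3 := poly_ode_iter ((1 - X ^ 2) ^ n) (2 * n - 2) (2 * n) (by
    simp only [derivative_mul, derivative_sub, derivative_one, derivative_X_pow, derivative_neg,
      derivative_C, derivative_X, derivative_ofNat] at h2
    simp only [map_sub, map_mul, map_ofNat]
    simp at h2 ⊢
    have c2 : (Polynomial.C (2:ℝ)) = 2 := rfl
    rw [c2] at h2
    linear_combination h2) n
  simp only [Function.iterate_succ_apply'] at h3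
  simp only [lpoly, derivative_C_mul]
  simp only [map_add, map_sub, map_mul, map_natCast, map_ofNat, map_one] at h3 ⊢
  linear_combination (C ((-1 : ℝ) ^ n / (2 ^ n * Nat.factorial n))) * h3

open Polynomial in
theorem lpoly_zero : lpoly 0 = 1 := by simp [lpoly]

open Polynomial in
theorem lpoly_one : lpoly 1 = X := by
  simp only [lpoly, Function.iterate_one, pow_one, derivative_sub, derivative_X_pow,
    derivative_one]
  have : (C (-1 / 2 : ℝ)) * 2 = -1 := by
    rw [← map_ofNat C 2, ← C_mul]; norm_num
  have c2 : (Polynomial.C (2:ℝ)) = 2 := rfl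
  simp [c2]
  linear_combination X * this * (-1)

open Polynomial in
theorem lpoly_rec (n : ℕ) :
    derivative (lpoly (n + 2)) = C (2 * (n : ℝ) + 3) * lpoly (n + 1) + derivative (lpoly n) := by
  have h1 : derivative (derivative ((1 - X ^ 2 : ℝ[X]) ^ (n + 2)))
      = C (-2 * ((n : ℝ) + 2) * (2 * n + 3)) * (1 - X ^ 2) ^ (n + 1)
        + C (4 * ((n : ℝ) + 1) * (n + 2)) * (1 - X ^ 2) ^ n := by
    simp only [derivative_pow_succ, derivative_mul, derivative_sub, derivative_one,
      derivative_X_pow, derivative_C, derivative_natCast]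
    have c2 : (Polynomial.C (2:ℝ)) = 2 := rfl
    have c3 : (Polynomial.C (3:ℝ)) = 3 := rfl
    have c4 : (Polynomial.C (4:ℝ)) = 4 := rfl
    simp [c2, c3, c4]
    ring
  have e1 : derivative^[n + 1 + 2] ((1 - X ^ 2 : ℝ[X]) ^ (n + 2))
      = derivative^[n+1] (derivative (derivative ((1 - X ^ 2 : ℝ[X]) ^ (n + 2)))) := by
    rw [Function.iterate_add_apply]; rfl
  simp only [lpoly, derivative_C_mul]
  rw [← Function.iterate_succ_apply' derivative (n + 2), ← Function.iterate_succ_apply' derivative n]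
  rw [show (n + 2).succ = n + 1 + 2 from rfl, e1, h1, iterate_map_add,
    iterate_derivative_C_mul, iterate_derivative_C_mul, mul_add]
  simp only [← mul_assoc, ← C_mul]
  have hf : (Nat.factorial n : ℝ) ≠ 0 := by positivity
  have f1 : (-1 : ℝ) ^ (n + 2) / (2 ^ (n + 2) * (n + 2).factorial)
      * (-2 * ((n : ℝ) + 2) * (2 * n + 3))
      = (2 * n + 3) * ((-1) ^ (n + 1) / (2 ^ (n + 1) * (n + 1).factorial)) := by
    simp only [Nat.factorial_succ, pow_succ]; push_cast; field_simp; ring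
  have f2 : (-1 : ℝ) ^ (n + 2) / (2 ^ (n + 2) * (n + 2).factorial)
      * (4 * ((n : ℝ) + 1) * (n + 2)) = (-1) ^ n / (2 ^ n * n.factorial) := by
    simp only [Nat.factorial_succ, pow_succ]; push_cast; field_simp; ring
  simp only [mul_assoc] at f1 f2 ⊢
  rw [f1, f2]

open Polynomial in
theorem lpoly_eval_one (n : ℕ) : (lpoly n).eval 1 = 1 := by
  have key : ∀ m : ℕ, 2 * (derivative (lpoly m)).eval 1 = m * (m + 1) * (lpoly m).eval 1 := by
    intro m
    have := congrArg (eval 1) (lpoly_ode m)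
    simp at this
    linarith
  induction n using Nat.twoStepInduction with
  | zero => simp [lpoly_zero]
  | one => simp [lpoly_one]
  | more n h0 h1 =>
    have r := congrArg (eval 1) (lpoly_rec n)
    have k2 := key (n + 2)
    have k0 := key n
    simp only [eval_add, eval_mul, eval_C] at r
    rw [r, h1] at k2
    rw [h0] at k0
    push_cast at k2
    have : ((n : ℝ) + 2) * (n + 2 + 1) * (eval 1 (lpoly (n + 2)) - 1) = 0 := by
      linear_combination -k2 + k0
    rcases mul_eq_zero.1 this with h | h
    · exact absurd h (by positivity)
    · linarith

open Polynomial in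
noncomputable def wpoly (n : ℕ) : ℝ[X] :=
  if n = 0 then 0 else
    ∑ i ∈ Finset.range ((n - 1) / 2 + 1),
      C ((2 * (n : ℝ) - 4 * (i : ℝ) - 1) / (((n : ℝ) - (i : ℝ)) * (2 * (i : ℝ) + 1))) *
        lpoly (n - 2 * i - 1)

theorem legendreW_eq (n : ℕ) : legendreW n = fun t => (wpoly n).eval t := by
  funext t
  unfold legendreW wpoly
  split_ifs
  · simp
  · simp [Polynomial.eval_finsetSum, legendreP_eq]

open Polynomial in
theorem lpoly_deriv_sum (n : ℕ) : derivative (lpoly (n + 1)) =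
    ∑ i ∈ Finset.range (n / 2 + 1), C (2 * (n : ℝ) - 4 * (i : ℝ) + 1) * lpoly (n - 2 * i) := by
  induction n using Nat.twoStepInduction with
  | zero => simp [lpoly_zero, lpoly_one]
  | one =>
    have := lpoly_rec 0
    rw [lpoly_zero] at this
    simp at this
    simp [this]
    left
    rw [← C_1, ← C_add]
    norm_num
  | more n h0 h1 =>
    rw [lpoly_rec, h0, show (n + 2) / 2 + 1 = (n / 2 + 1) + 1 by omega,
      Finset.sum_range_succ' _ (n / 2 + 1)]
    rw [add_comm]
    congr 1
    · apply Finset.sum_congr rfl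
      intro i _
      rw [show n + 2 - 2 * (i + 1) = n - 2 * i by omega]
      congr 2
      push_cast; ring
    · congr 2
      push_cast; ring

open Polynomial in
theorem wpoly_ode (n : ℕ) :
    (1 - X ^ 2) * derivative (derivative (wpoly n)) - 2 * X * derivative (wpoly n)
      + C ((n : ℝ) * (n + 1)) * wpoly n = 2 * derivative (lpoly n) := by
  cases n with
  | zero => simp [wpoly, lpoly_zero]
  | succ n =>
    rw [lpoly_deriv_sum]
    simp only [wpoly, Nat.succ_ne_zero, if_false, derivative_sum, Finset.mul_sum,
      ← Finset.sum_sub_distrib, ← Finset.sum_add_distrib, Nat.add_sub_cancel]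
    apply Finset.sum_congr rfl
    intro i hi
    have hi' : 2 * i ≤ n := by
      have := Finset.mem_range.1 hi; omega
    rw [show n + 1 - 2 * i - 1 = n - 2 * i by omega]
    have ho := lpoly_ode (n - 2 * i)
    rw [Nat.cast_sub hi'] at ho
    push_cast at ho ⊢
    simp only [derivative_C_mul]
    set c : ℝ := (2 * ((n : ℝ) + 1) - 4 * i - 1) / ((n + 1 - i) * (2 * i + 1)) with hc
    have hne : ((n : ℝ) + 1 - i) ≠ 0 := by
      have : (2 : ℝ) * i ≤ n := by exact_mod_cast hi'
      have : (0 : ℝ) ≤ i := by positivity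
      intro h; linarith
    have hne2 : (2 * (i : ℝ) + 1) ≠ 0 := by positivity
    have e : c * (((n : ℝ) + 1) * (n + 1 + 1)) - c * ((n - 2 * i) * (n - 2 * i + 1))
        = 2 * (2 * n - 4 * i + 1) := by
      rw [hc]; field_simp; ring
    have e' := congrArg (C : ℝ → ℝ[X]) e
    rw [C_sub, C_mul, C_mul (a := c), C_mul (a := (2 : ℝ)), show (C (2 : ℝ) : ℝ[X]) = 2 from rfl] at e'
    linear_combination C c * ho + lpoly (n - 2 * i) * e'

open Set in
/-- Repeated differentiation of a second order ODE (function version). -/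
theorem fun_ode_iter (F : ℕ → ℝ → ℝ) (l : ℝ)
    (hF : ∀ k, ∀ x ∈ Ioo (-1 : ℝ) 1, HasDerivAt (F k) (F (k + 1) x) x)
    (h : ∀ x ∈ Ioo (-1 : ℝ) 1, (1 - x ^ 2) * F 2 x - 2 * x * F 1 x + l * F 0 x = 0) (k : ℕ) :
    ∀ x ∈ Ioo (-1 : ℝ) 1, (1 - x ^ 2) * F (k + 2) x - 2 * (k + 1) * x * F (k + 1) x
      + (l - k * (k + 1)) * F k x = 0 := by
  induction k with
  | zero => intro x hx; have := h x hx; simp; linarith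
  | succ k ih =>
    intro x hx
    have hu : HasDerivAt (fun x : ℝ => 1 - x ^ 2) (-(2 * x)) x := by
      simpa using (hasDerivAt_pow 2 x).const_sub 1
    have hd := ((hu.mul (hF (k + 2) x hx)).sub
      (((hasDerivAt_id x).const_mul (2 * ((k : ℝ) + 1))).mul (hF (k + 1) x hx))).add
      ((hF k x hx).const_mul (l - k * (k + 1)))
    have hz : HasDerivAt (fun _ : ℝ => (0 : ℝ)) 0 x := hasDerivAt_const x 0
    have he := hz.congr_of_eventuallyEq (f₁ := _) (Filter.eventuallyEq_of_mem
      (isOpen_Ioo.mem_nhds hx) (fun y hy => ih y hy))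
    have := hd.unique he
    simp only [id] at this
    push_cast
    linear_combination this

open Set in
theorem master_of (p : ℕ) (l : ℝ) (h h1 h2 : ℝ → ℝ)
    (d0 : ∀ x ∈ Ioo (-1 : ℝ) 1, HasDerivAt h (h1 x) x)
    (d1 : ∀ x ∈ Ioo (-1 : ℝ) 1, HasDerivAt h1 (h2 x) x)
    (ho : ∀ x ∈ Ioo (-1 : ℝ) 1, (1 - x ^ 2) * h2 x - 2 * (p + 1) * x * h1 x
      + (l - p * (p + 1)) * h x = 0) (A : ℝ → ℝ) (hA : A = fun x => (1 - x ^ 2) ^ p * h x) :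
    ∀ x ∈ Ioo (-1 : ℝ) 1, DifferentiableAt ℝ A x ∧ DifferentiableAt ℝ (deriv A) x ∧
      (1 - x ^ 2) * deriv (deriv A) x + 2 * ((p : ℝ) - 1) * x * deriv A x
        + (l - (p : ℝ) * ((p : ℝ) - 1)) * A x = 0 := by
  have hpos : ∀ x ∈ Ioo (-1 : ℝ) 1, (1 - x ^ 2 : ℝ) ≠ 0 := by
    intro x hx; have := hx.1; have := hx.2; nlinarith
  have hu : ∀ x : ℝ, HasDerivAt (fun x : ℝ => 1 - x ^ 2) (-(2 * x)) x := fun x => by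
    simpa using (hasDerivAt_pow 2 x).const_sub 1
  have hup : ∀ x ∈ Ioo (-1 : ℝ) 1, HasDerivAt (fun x : ℝ => (1 - x ^ 2) ^ p)
      ((1 - x ^ 2) ^ p * (-(2 * p * x) / (1 - x ^ 2))) x := by
    intro x hx
    refine ((hu x).pow p).congr_deriv ?_
    have := hpos x hx
    cases p with
    | zero => simp
    | succ p => simp [pow_succ]; field_simp
  have dA : ∀ x ∈ Ioo (-1 : ℝ) 1, HasDerivAt A
      ((1 - x ^ 2) ^ p * (h1 x - 2 * p * x * h x / (1 - x ^ 2))) x := by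
    intro x hx
    rw [hA]
    refine ((hup x hx).mul (d0 x hx)).congr_deriv ?_
    ring
  intro x hx
  have ev : deriv A =ᶠ[nhds x]
      fun x => (1 - x ^ 2) ^ p * (h1 x - 2 * p * x * h x / (1 - x ^ 2)) :=
    Filter.eventuallyEq_of_mem (isOpen_Ioo.mem_nhds hx) (fun y hy => (dA y hy).deriv)
  have dd := ((hup x hx).mul ((d1 x hx).sub
    ((((hasDerivAt_id x).const_mul (2 * (p : ℝ))).mul (d0 x hx)).div (hu x) (hpos x hx)))).congr_of_eventuallyEq
      ev
  refine ⟨(dA x hx).differentiableAt, dd.differentiableAt, ?_⟩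
  rw [dd.deriv, (dA x hx).deriv, hA]
  have hn := hpos x hx
  have o := ho x hx
  simp only [id, Pi.sub_apply, Pi.mul_apply, Pi.div_apply]
  generalize (1 - x ^ 2) ^ p = U
  have o2 : h2 x = (2 * (p + 1) * x * h1 x - (l - p * (p + 1)) * h x) / (1 - x ^ 2) := by
    field_simp; linear_combination o
  rw [o2]
  field_simp
  ring

open Set in
theorem descend (F : ℕ → ℝ → ℝ) (n : ℕ)
    (hF : ∀ k, ∀ x ∈ Ioo (-1 : ℝ) 1, HasDerivAt (F k) (F (k + 1) x) x)
    (h : ∀ x ∈ Ioo (-1 : ℝ) 1,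
      (1 - x ^ 2) * F 2 x - 2 * x * F 1 x + ((n : ℝ) * (n + 1)) * F 0 x = 0) (p : ℕ) (hp : p ≤ n)
    (hz : ∀ x ∈ Ioo (-1 : ℝ) 1, F p x = 0) : ∀ x ∈ Ioo (-1 : ℝ) 1, F 0 x = 0 := by
  induction p with
  | zero => exact hz
  | succ k ih =>
    apply ih (by omega)
    intro x hx
    have e := fun_ode_iter F _ hF h k x hx
    have z2 : F (k + 2) x = 0 := by
      refine (hF (k + 1) x hx).unique ?_
      exact (hasDerivAt_const x (0 : ℝ)).congr_of_eventuallyEq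
        (Filter.eventuallyEq_of_mem (isOpen_Ioo.mem_nhds hx) (fun y hy => hz y hy))
    rw [z2, hz x hx] at e
    have hk : (k : ℝ) + 1 ≤ n := by exact_mod_cast hp
    have hk0 : (0 : ℝ) ≤ k := by positivity
    have : (n : ℝ) * (n + 1) - k * (k + 1) ≠ 0 := by nlinarith
    simpa [this] using e

open Set in
theorem zero_at_one (f : ℝ → ℝ) (hf : Continuous f) (h : ∀ x ∈ Ioo (-1 : ℝ) 1, f x = 0) :
    f 1 = 0 := by
  have : EqOn f (fun _ => 0) (closure (Ioo (-1 : ℝ) 1)) :=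
    EqOn.closure (fun x hx => h x hx) hf continuous_const
  apply this
  rw [closure_Ioo (by norm_num)]
  constructor <;> norm_num

open Set in
/-- Zero initial data at `0` give the zero solution. -/
theorem ode_zero (c m : ℝ) (a : ℝ → ℝ)
    (hd : ∀ x ∈ Ioo (-1 : ℝ) 1, DifferentiableAt ℝ a x ∧ DifferentiableAt ℝ (deriv a) x)
    (ho : ∀ x ∈ Ioo (-1 : ℝ) 1,
      (1 - x ^ 2) * deriv (deriv a) x + c * x * deriv a x + m * a x = 0)
    (h0 : a 0 = 0) (h1 : deriv a 0 = 0) : ∀ x ∈ Ioo (-1 : ℝ) 1, a x = 0 := by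
  intro x hx
  obtain ⟨r, hr, hr1⟩ := exists_between (abs_lt.2 ⟨by linarith [hx.1], hx.2⟩ : |x| < 1)
  have hr0 : 0 < r := (abs_nonneg x).trans_lt hr
  have hu : ∀ t ∈ Ioo (-r) r, 0 < 1 - r ^ 2 ∧ 1 - r ^ 2 ≤ 1 - t ^ 2 ∧ |t| ≤ 1 := by
    intro t ht
    have := ht.1
    have := ht.2
    refine ⟨by nlinarith, by nlinarith, abs_le.2 ⟨by linarith, by linarith⟩⟩
  let K : ℝ := 1 + (|c| + |m|) / (1 - r ^ 2)
  have hK : 0 ≤ K := by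
    have := (hu 0 ⟨by linarith, hr0⟩).1
    positivity
  let v : ℝ → ℝ × ℝ → ℝ × ℝ := fun t z => (z.2, -(c * t * z.2 + m * z.1) / (1 - t ^ 2))
  have hv : ∀ t ∈ Ioo (-r) r, LipschitzOnWith ⟨K, hK⟩ (v t) univ := by
    intro t ht
    obtain ⟨u1, u2, u3⟩ := hu t ht
    apply LipschitzOnWith.of_dist_le_mul
    intro y _ z _
    rw [dist_eq_norm, dist_eq_norm]
    change _ ≤ K * _
    have b1 : |y.1 - z.1| ≤ ‖y - z‖ := norm_fst_le (y - z)
    have b2 : |y.2 - z.2| ≤ ‖y - z‖ := norm_snd_le (y - z)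
    set N := ‖y - z‖
    have hN : 0 ≤ N := norm_nonneg _
    have hq : 0 ≤ (|c| + |m|) / (1 - r ^ 2) := by positivity
    refine max_le ?_ ?_
    · change |y.2 - z.2| ≤ _
      simp only [K]
      nlinarith [mul_nonneg hq hN]
    · change |-(c * t * y.2 + m * y.1) / (1 - t ^ 2) - -(c * t * z.2 + m * z.1) / (1 - t ^ 2)| ≤ _
      have e : -(c * t * y.2 + m * y.1) / (1 - t ^ 2) - -(c * t * z.2 + m * z.1) / (1 - t ^ 2)
        = -(c * t * (y.2 - z.2) + m * (y.1 - z.1)) / (1 - t ^ 2) := by ring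
      rw [e, abs_div, abs_neg, abs_of_pos (by linarith : 0 < 1 - t ^ 2)]
      have e2 : |c * t * (y.2 - z.2) + m * (y.1 - z.1)| ≤ (|c| + |m|) * N := by
        calc _ ≤ |c * t * (y.2 - z.2)| + |m * (y.1 - z.1)| := abs_add_le _ _
          _ = |c| * |t| * |y.2 - z.2| + |m| * |y.1 - z.1| := by simp only [abs_mul]
          _ ≤ |c| * 1 * N + |m| * N := by gcongr
          _ = _ := by ring
      calc _ ≤ (|c| + |m|) * N / (1 - r ^ 2) := by gcongr
        _ ≤ K * N := by
          simp only [K]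
          have : (|c| + |m|) * N / (1 - r ^ 2) = (|c| + |m|) / (1 - r ^ 2) * N := by ring
          rw [this]; linarith
  have sub : ∀ t ∈ Ioo (-r) r, t ∈ Ioo (-1 : ℝ) 1 := fun t ht =>
    ⟨by linarith [ht.1], by linarith [ht.2]⟩
  have := ODE_solution_unique_of_mem_Ioo (t₀ := 0) (f := fun t => (a t, deriv a t))
    (g := fun _ => (0, 0)) hv ⟨by linarith, hr0⟩ ?_ ?_ ?_
  · have := this (abs_lt.1 hr)
    exact congrArg Prod.fst this
  · intro t ht
    refine ⟨?_, mem_univ _⟩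
    have h := hd t (sub t ht)
    refine (h.1.hasDerivAt.prodMk h.2.hasDerivAt).congr_deriv ?_
    simp only [v, Prod.mk.injEq, true_and]
    obtain ⟨u1, u2, u3⟩ := hu t ht
    have : 1 - t ^ 2 ≠ 0 := by linarith
    field_simp
    linear_combination ho t (sub t ht)
  · intro t ht
    refine ⟨?_, mem_univ _⟩
    refine (hasDerivAt_const t ((0 : ℝ), (0 : ℝ))).congr_deriv ?_
    simp [v, Prod.ext_iff]
  · simp [h0, h1]

open Set in
theorem hasDerivAt_iter (f : ℝ → ℝ) (hf : ContDiffOn ℝ (⊤ : ℕ∞) f (Ioo (-1 : ℝ) 1)) (k : ℕ) :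
    ∀ x ∈ Ioo (-1 : ℝ) 1, HasDerivAt (iteratedDeriv k f) (iteratedDeriv (k + 1) f x) x := by
  intro x hx
  rw [iteratedDeriv_succ]
  apply DifferentiableAt.hasDerivAt
  have h := hf.differentiableOn_iteratedDerivWithin (m := k) (by exact_mod_cast ENat.natCast_lt_top k)
    isOpen_Ioo.uniqueDiffOn
  have h2 := (h x hx).differentiableAt (isOpen_Ioo.mem_nhds hx)
  refine h2.congr_of_eventuallyEq (Filter.eventuallyEq_of_mem (isOpen_Ioo.mem_nhds hx) ?_)
  intro y hy
  exact (iteratedDerivWithin_of_isOpen isOpen_Ioo hy).symm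

theorem legendreP_contDiff (n : ℕ) : ContDiff ℝ (⊤ : ℕ∞) (legendreP n) := by
  rw [legendreP_eq]; simpa using (lpoly n).contDiff_aeval (𝕜 := ℝ) (⊤ : ℕ∞)

theorem legendreW_contDiff (n : ℕ) : ContDiff ℝ (⊤ : ℕ∞) (legendreW n) := by
  rw [legendreW_eq]; simpa using (wpoly n).contDiff_aeval (𝕜 := ℝ) (⊤ : ℕ∞)

open Set in
theorem legendreQ_contDiffOn (n : ℕ) :
    ContDiffOn ℝ (⊤ : ℕ∞) (legendreQ n) (Ioo (-1 : ℝ) 1) := by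
  intro x hx
  apply ContDiffAt.contDiffWithinAt
  have h1 : (1 - x) ≠ 0 := by linarith [hx.2]
  have h2 : (1 + x) ≠ 0 := by linarith [hx.1]
  have := (legendreP_contDiff n).contDiffAt (x := x)
  have := (legendreW_contDiff n).contDiffAt (x := x)
  have hl : ContDiffAt ℝ (⊤ : ℕ∞) (fun τ : ℝ => Real.log ((1 + τ) / (1 - τ))) x := by
    refine ContDiffAt.log (f := fun τ : ℝ => (1 + τ) / (1 - τ)) ?_ (div_ne_zero h2 h1)
    exact ContDiffAt.div (by fun_prop) (by fun_prop) h1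
  unfold legendreQ
  fun_prop

open Set in
theorem hasDerivAt_log (x : ℝ) (hx : x ∈ Ioo (-1 : ℝ) 1) :
    HasDerivAt (fun τ : ℝ => Real.log ((1 + τ) / (1 - τ))) (2 / (1 - x ^ 2)) x := by
  have h1 : (1 - x) ≠ 0 := by linarith [hx.2]
  have h2 : (1 + x) ≠ 0 := by linarith [hx.1]
  have h3 : (1 - x ^ 2) ≠ 0 := by
    rw [show 1 - x ^ 2 = (1 - x) * (1 + x) by ring]; exact mul_ne_zero h1 h2
  have := ((((hasDerivAt_id x).const_add 1).div ((hasDerivAt_id x).const_sub 1) h1).log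
    (div_ne_zero h2 h1))
  refine this.congr_deriv ?_
  simp only [id, Pi.div_apply]
  field_simp
  ring

open Set in
theorem q_derivs (n : ℕ) : ∀ x ∈ Ioo (-1 : ℝ) 1,
    iteratedDeriv 1 (legendreQ n) x =
      1 / 2 * (lpoly n).derivative.eval x * Real.log ((1 + x) / (1 - x))
        + (lpoly n).eval x / (1 - x ^ 2) - (wpoly n).derivative.eval x := by
  intro x hx
  rw [iteratedDeriv_one]
  have := ((((lpoly n).hasDerivAt x).const_mul (1 / 2)).mul (hasDerivAt_log x hx)).sub
    ((wpoly n).hasDerivAt x)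
  have h2 : HasDerivAt (legendreQ n) _ x := this.congr_of_eventuallyEq (by
    apply Filter.Eventually.of_forall
    intro y; simp [legendreQ, legendreP_eq, legendreW_eq])
  rw [h2.deriv]
  ring

open Set in
theorem q_ode (n : ℕ) : ∀ x ∈ Ioo (-1 : ℝ) 1,
    (1 - x ^ 2) * iteratedDeriv 2 (legendreQ n) x - 2 * x * iteratedDeriv 1 (legendreQ n) x
      + ((n : ℝ) * (n + 1)) * iteratedDeriv 0 (legendreQ n) x = 0 := by
  intro x hx
  have h3 : (1 - x ^ 2) ≠ 0 := by
    have := hx.1; have := hx.2; nlinarith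
  have hu : HasDerivAt (fun x : ℝ => 1 - x ^ 2) (-(2 * x)) x := by
    simpa using (hasDerivAt_pow 2 x).const_sub 1
  have := (((((lpoly n).derivative.hasDerivAt x).const_mul (1 / 2)).mul (hasDerivAt_log x hx)).add
    (((lpoly n).hasDerivAt x).div hu h3)).sub ((wpoly n).derivative.hasDerivAt x)
  have h2 : HasDerivAt (iteratedDeriv 1 (legendreQ n)) _ x := this.congr_of_eventuallyEq
    (Filter.eventuallyEq_of_mem (isOpen_Ioo.mem_nhds hx) (fun y hy => by
      simpa using q_derivs n y hy))
  rw [iteratedDeriv_succ, h2.deriv, q_derivs n x hx, iteratedDeriv_zero]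
  have o1 := congrArg (Polynomial.eval x) (lpoly_ode n)
  have o2 := congrArg (Polynomial.eval x) (wpoly_ode n)
  simp at o1 o2
  simp only [legendreQ, legendreP_eq, legendreW_eq]
  generalize Real.log ((1 + x) / (1 - x)) = L
  field_simp
  linear_combination (1 - x ^ 2) * L * o1 - 2 * (1 - x ^ 2) * o2

open Set in
theorem p_ode (n : ℕ) : ∀ x ∈ Ioo (-1 : ℝ) 1,
    (1 - x ^ 2) * iteratedDeriv 2 (legendreP n) x - 2 * x * iteratedDeriv 1 (legendreP n) x
      + ((n : ℝ) * (n + 1)) * iteratedDeriv 0 (legendreP n) x = 0 := by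
  intro x _
  rw [legendreP_eq, iteratedDeriv_poly, iteratedDeriv_poly, iteratedDeriv_poly]
  have o1 := congrArg (Polynomial.eval x) (lpoly_ode n)
  simp at o1
  simpa using o1

open Set in
theorem indep0 (n : ℕ) (C D : ℝ)
    (h : ∀ x ∈ Ioo (-1 : ℝ) 1, C * legendreP n x + D * legendreQ n x = 0) : C = 0 ∧ D = 0 := by
  have hq := fun x hx => hasDerivAt_iter (legendreQ n) (legendreQ_contDiffOn n) 0 x hx
  have hD : D = 0 := by
    have key : ∀ x ∈ Ioo (-1 : ℝ) 1, D * ((lpoly n).eval x ^ 2 - (1 - x ^ 2) *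
        ((lpoly n).eval x * (wpoly n).derivative.eval x
          - (lpoly n).derivative.eval x * (wpoly n).eval x)) = 0 := by
      intro x hx
      have h3 : (1 - x ^ 2) ≠ 0 := by
        have := hx.1; have := hx.2; nlinarith
      have d := (((lpoly n).hasDerivAt x).const_mul C).add ((hq x hx).const_mul D)
      have z : _ = (0 : ℝ) := d.unique ((hasDerivAt_const x (0 : ℝ)).congr_of_eventuallyEq
        (Filter.eventuallyEq_of_mem (isOpen_Ioo.mem_nhds hx) (fun y hy => by
          have := h y hy
          rw [legendreP_eq] at this
          simpa using this)))
      rw [zero_add, q_derivs n x hx] at z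
      have h0 := h x hx
      simp only [legendreQ, legendreP_eq, legendreW_eq] at h0
      field_simp at z
      linear_combination (lpoly n).eval x * z / 2 * 1 - (1 - x ^ 2) * (lpoly n).derivative.eval x * h0
    have := zero_at_one _ (by fun_prop) key
    simpa [lpoly_eval_one] using this
  refine ⟨?_, hD⟩
  subst hD
  have := zero_at_one (fun x => C * (lpoly n).eval x) (by fun_prop) (fun x hx => by
    have := h x hx
    rw [legendreP_eq] at this
    simpa using this)
  simpa [lpoly_eval_one] using this

/-- for `0 ≤ p ≤ ν`, `A = (1-τ²)^p P_ν^{(p)}` and `B = (1-τ²)^p q_ν^{(p)}`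
are linearly independent solutions of the master ODE on `(-1,1)`, and every
twice-differentiable solution is uniquely `C·A + D·B`. -/
theorem stmt_16 (p ν : ℕ) (hp : p ≤ ν) (A B : ℝ → ℝ)
    (hA : A = fun τ => (1 - τ ^ 2) ^ p * iteratedDeriv p (legendreP ν) τ)
    (hB : B = fun τ => (1 - τ ^ 2) ^ p * iteratedDeriv p (legendreQ ν) τ) :
    (∀ τ ∈ Set.Ioo (-1 : ℝ) 1,
      (1 - τ ^ 2) * deriv (deriv A) τ + 2 * ((p : ℝ) - 1) * τ * deriv A τ
        + ((ν : ℝ) * ((ν : ℝ) + 1) - (p : ℝ) * ((p : ℝ) - 1)) * A τ = 0) ∧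
    (∀ τ ∈ Set.Ioo (-1 : ℝ) 1,
      (1 - τ ^ 2) * deriv (deriv B) τ + 2 * ((p : ℝ) - 1) * τ * deriv B τ
        + ((ν : ℝ) * ((ν : ℝ) + 1) - (p : ℝ) * ((p : ℝ) - 1)) * B τ = 0) ∧
    (∀ C D : ℝ, (∀ τ ∈ Set.Ioo (-1 : ℝ) 1, C * A τ + D * B τ = 0) → C = 0 ∧ D = 0) ∧
    (∀ a : ℝ → ℝ,
      (∀ τ ∈ Set.Ioo (-1 : ℝ) 1,
        DifferentiableAt ℝ a τ ∧ DifferentiableAt ℝ (deriv a) τ) →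
      (∀ τ ∈ Set.Ioo (-1 : ℝ) 1,
        (1 - τ ^ 2) * deriv (deriv a) τ + 2 * ((p : ℝ) - 1) * τ * deriv a τ
          + ((ν : ℝ) * ((ν : ℝ) + 1) - (p : ℝ) * ((p : ℝ) - 1)) * a τ = 0) →
      ∃! CD : ℝ × ℝ, ∀ τ ∈ Set.Ioo (-1 : ℝ) 1, a τ = CD.1 * A τ + CD.2 * B τ) := by
  have hFP := hasDerivAt_iter (legendreP ν) (legendreP_contDiff ν).contDiffOn
  have hFQ := hasDerivAt_iter (legendreQ ν) (legendreQ_contDiffOn ν)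
  have mA := master_of p ((ν : ℝ) * (ν + 1)) _ _ _ (hFP p) (hFP (p + 1))
    (fun_ode_iter (fun k => iteratedDeriv k (legendreP ν)) _ hFP (p_ode ν) p) A hA
  have mB := master_of p ((ν : ℝ) * (ν + 1)) _ _ _ (hFQ p) (hFQ (p + 1))
    (fun_ode_iter (fun k => iteratedDeriv k (legendreQ ν)) _ hFQ (q_ode ν) p) B hB
  have ind : ∀ C D : ℝ, (∀ τ ∈ Set.Ioo (-1 : ℝ) 1, C * A τ + D * B τ = 0) → C = 0 ∧ D = 0 := by
    intro C D h
    apply indep0 ν C D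
    have := descend (fun k x => C * iteratedDeriv k (legendreP ν) x
      + D * iteratedDeriv k (legendreQ ν) x) ν
      (fun k x hx => ((hFP k x hx).const_mul C).add ((hFQ k x hx).const_mul D))
      (fun x hx => by linear_combination C * p_ode ν x hx + D * q_ode ν x hx) p hp
      (fun x hx => by
        have h3 : (1 - x ^ 2) ≠ 0 := by
          have := hx.1; have := hx.2; nlinarith
        have e := h x hx
        rw [hA, hB] at e
        have e2 : (1 - x ^ 2) ^ p * (C * iteratedDeriv p (legendreP ν) x
          + D * iteratedDeriv p (legendreQ ν) x) = 0 := by linear_combination e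
        exact (mul_eq_zero.1 e2).resolve_left (pow_ne_zero _ h3))
    simpa using this
  refine ⟨fun x hx => (mA x hx).2.2, fun x hx => (mB x hx).2.2, ind, ?_⟩
  -- linear combinations of solutions with zero data at `0` vanish
  have comb : ∀ a : ℝ → ℝ,
      (∀ τ ∈ Set.Ioo (-1 : ℝ) 1,
        DifferentiableAt ℝ a τ ∧ DifferentiableAt ℝ (deriv a) τ) →
      (∀ τ ∈ Set.Ioo (-1 : ℝ) 1,
        (1 - τ ^ 2) * deriv (deriv a) τ + 2 * ((p : ℝ) - 1) * τ * deriv a τ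
          + ((ν : ℝ) * ((ν : ℝ) + 1) - (p : ℝ) * ((p : ℝ) - 1)) * a τ = 0) →
      ∀ E C D : ℝ, E * a 0 + C * A 0 + D * B 0 = 0 →
        E * deriv a 0 + C * deriv A 0 + D * deriv B 0 = 0 →
        ∀ τ ∈ Set.Ioo (-1 : ℝ) 1, E * a τ + C * A τ + D * B τ = 0 := by
    intro a ha hao E C D h0 h1
    have d1 : ∀ x ∈ Set.Ioo (-1 : ℝ) 1, HasDerivAt (fun t => E * a t + C * A t + D * B t)
        (E * deriv a x + C * deriv A x + D * deriv B x) x := fun x hx =>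
      (((ha x hx).1.hasDerivAt.const_mul E).add ((mA x hx).1.hasDerivAt.const_mul C)).add
        ((mB x hx).1.hasDerivAt.const_mul D)
    have d2 : ∀ x ∈ Set.Ioo (-1 : ℝ) 1, HasDerivAt (deriv fun t => E * a t + C * A t + D * B t)
        (E * deriv (deriv a) x + C * deriv (deriv A) x + D * deriv (deriv B) x) x := fun x hx =>
      ((((ha x hx).2.hasDerivAt.const_mul E).add ((mA x hx).2.1.hasDerivAt.const_mul C)).add
        ((mB x hx).2.1.hasDerivAt.const_mul D)).congr_of_eventuallyEq
        (Filter.eventuallyEq_of_mem (isOpen_Ioo.mem_nhds hx) (fun y hy => (d1 y hy).deriv))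
    refine ode_zero (2 * ((p : ℝ) - 1)) ((ν : ℝ) * ((ν : ℝ) + 1) - (p : ℝ) * ((p : ℝ) - 1))
      (fun t => E * a t + C * A t + D * B t)
      (fun x hx => ⟨(d1 x hx).differentiableAt, (d2 x hx).differentiableAt⟩) ?_ h0 ?_
    · intro x hx
      rw [(d2 x hx).deriv, (d1 x hx).deriv]
      linear_combination E * hao x hx + C * (mA x hx).2.2 + D * (mB x hx).2.2
    · rw [(d1 0 (by norm_num)).deriv]; exact h1
  intro a ha hao
  have W0 : A 0 * deriv B 0 - deriv A 0 * B 0 ≠ 0 := by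
    intro hw
    have k1 := ind (deriv B 0) (-deriv A 0) (fun x hx => by
      have := comb a ha hao 0 (deriv B 0) (-deriv A 0) (by linear_combination hw) (by ring) x hx
      simpa using this)
    have k2 := ind (B 0) (-A 0) (fun x hx => by
      have := comb a ha hao 0 (B 0) (-A 0) (by ring) (by linear_combination -hw) x hx
      simpa using this)
    have := ind 1 0 (fun x hx => by
      have := comb a ha hao 0 1 0 (by linear_combination -k2.2) (by linear_combination -k1.2) x hx
      simpa using this)
    exact one_ne_zero this.1
  obtain ⟨w, hw⟩ : ∃ w, (A 0 * deriv B 0 - deriv A 0 * B 0) * w = 1 := ⟨_, mul_inv_cancel₀ W0⟩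
  obtain ⟨C0, D0, h0⟩ : ∃ C0 D0 : ℝ, ∀ τ ∈ Set.Ioo (-1 : ℝ) 1, a τ = C0 * A τ + D0 * B τ := by
    refine ⟨(a 0 * deriv B 0 - deriv a 0 * B 0) * w, (A 0 * deriv a 0 - deriv A 0 * a 0) * w, ?_⟩
    intro x hx
    have := comb a ha hao (-1)
      ((a 0 * deriv B 0 - deriv a 0 * B 0) * w) ((A 0 * deriv a 0 - deriv A 0 * a 0) * w)
      (by linear_combination a 0 * hw) (by linear_combination deriv a 0 * hw) x hx
    linear_combination -this
  refine ⟨(C0, D0), h0, ?_⟩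
  rintro ⟨C, D⟩ h
  have := ind (C - C0) (D - D0) (fun x hx => by
    have h2 := h x hx
    simp only at h2
    linear_combination h0 x hx - h2)
  exact Prod.ext (sub_eq_zero.1 this.1) (sub_eq_zero.1 this.2)
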